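/- Let V be a complex Hilbert space and A : V → V a compact continuous linear operator. Let (V_k)_{k∈ℕ} be a family of finite-dimensional, pairwise orthogonal closed subspaces of V whose algebraic span is dense in V (so V is the Hilbert sum ⊕_{k} V_k), and assume that for each k the orthogonal projection P_k of V onto V_k commutes with A. If f : ℝ → V is bounded, continuous and almost automorphic, then every bounded differentiable solution y of y'(t) = A(y(t)) + f(t) on ℝ is almost automorphic. -/

import Mathlib

/-!
Let `Pₛ` be the orthogonal projection onto the sum `Uₛ` of the `W k`, `k ∈ s`, for a finite set `s`.
Since `A` preserves `Uₛᗮ`, the function `Pₛ ∘ y` solves a linear equation in the finite-dimensional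
space `Uₛ`, where generalized eigenvectors of the transposed operator reduce the problem to scalar
equations `u' = l u + g`. These are solved by a convolution if `re l ≠ 0`, and by integrating
`t ↦ exp (-l t) g t` if `re l = 0`.

It remains to see that `Pₛ ∘ y → y` uniformly. Choose `t₀` at which `‖y t₀‖` is almost maximal, and
`s` such that `‖Pₛ (y t₀)‖` is still almost maximal. Almost automorphy of `Pₛ ∘ y` makes
`‖Pₛ (y t)‖` almost maximal again for `t` in a relatively dense set, and at these times Pythagoras
leaves no room for `y t - Pₛ (y t)`. As `A` is compact and the range of `f` is relatively compact,
`y'` takes values in a compact set, on which `1 - Pₛ` tends uniformly to `0`; by the mean value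
inequality `y - Pₛ ∘ y` then stays small across the bounded gaps between these times.
-/

open MeasureTheory Filter Topology

/-- A continuous function `ψ : ℝ → V` into a Banach space is almost automorphic if for every
sequence of reals there is a subsequence `(τₙ)` and a function `ψ̃` with
`ψ(t+τₙ) → ψ̃(t)` and `ψ̃(t−τₙ) → ψ(t)` pointwise on `ℝ`. -/
def AlmostAutomorphic {V : Type*} [NormedAddCommGroup V] (ψ : ℝ → V) : Prop :=
  Continuous ψ ∧ ∀ σ : ℕ → ℝ, ∃ k : ℕ → ℕ, StrictMono k ∧ ∃ ψt : ℝ → V,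
    (∀ t : ℝ, Tendsto (fun n => ψ (t + σ (k n))) atTop (𝓝 (ψt t))) ∧
    (∀ t : ℝ, Tendsto (fun n => ψt (t - σ (k n))) atTop (𝓝 (ψ t)))

/-- The relation between `ψ` and `ψ̃` in the definition of almost automorphy, where the sequence of
shifts `τₙ` is replaced by a filter `F` of shifts: passing to a subsequence then amounts to
replacing `F` by a smaller filter. -/
structure IsAutomorphicLimit {X : Type*} [TopologicalSpace X] (F : Filter ℝ) (ψ ψt : ℝ → X) :
    Prop where
  tendsto_add (t : ℝ) : Tendsto (fun s => ψ (t + s)) F (𝓝 (ψt t))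
  tendsto_sub (t : ℝ) : Tendsto (fun s => ψt (t - s)) F (𝓝 (ψ t))

namespace IsAutomorphicLimit

variable {X Y : Type*} [TopologicalSpace X] [TopologicalSpace Y] {F G : Filter ℝ}
  {ψ ψt : ℝ → X} {χ χt : ℝ → Y}

theorem mono (h : IsAutomorphicLimit F ψ ψt) (hGF : G ≤ F) : IsAutomorphicLimit G ψ ψt :=
  ⟨fun t => (h.tendsto_add t).mono_left hGF, fun t => (h.tendsto_sub t).mono_left hGF⟩

theorem symm (h : IsAutomorphicLimit F ψ ψt) : IsAutomorphicLimit (F.map Neg.neg) ψt ψ := by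
  refine ⟨fun t => ?_, fun t => ?_⟩ <;> rw [tendsto_map'_iff]
  · simpa only [Function.comp_def, ← sub_eq_add_neg] using h.tendsto_sub t
  · simpa only [Function.comp_def, sub_neg_eq_add] using h.tendsto_add t

theorem comp_neg (h : IsAutomorphicLimit F ψ ψt) :
    IsAutomorphicLimit (F.map Neg.neg) (fun t => ψ (-t)) (fun t => ψt (-t)) := by
  refine ⟨fun t => ?_, fun t => ?_⟩ <;> rw [tendsto_map'_iff]
  · simpa only [Function.comp_def, neg_add, neg_neg] using h.tendsto_add (-t)
  · simpa only [Function.comp_def, sub_neg_eq_add, neg_add'] using h.tendsto_sub (-t)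

theorem continuous_comp (h : IsAutomorphicLimit F ψ ψt) {g : X → Y} (hg : Continuous g) :
    IsAutomorphicLimit F (fun t => g (ψ t)) (fun t => g (ψt t)) :=
  ⟨fun t => (hg.tendsto _).comp (h.tendsto_add t), fun t => (hg.tendsto _).comp (h.tendsto_sub t)⟩

theorem prodMk (h : IsAutomorphicLimit F ψ ψt) (h' : IsAutomorphicLimit F χ χt) :
    IsAutomorphicLimit F (fun t => (ψ t, χ t)) (fun t => (ψt t, χt t)) :=
  ⟨fun t => (h.tendsto_add t).prodMk_nhds (h'.tendsto_add t),
    fun t => (h.tendsto_sub t).prodMk_nhds (h'.tendsto_sub t)⟩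

theorem mem_of_isClosed [F.NeBot] (h : IsAutomorphicLimit F ψ ψt) {S : Set X} (hS : IsClosed S)
    (hψ : ∀ t, ψ t ∈ S) (t : ℝ) : ψt t ∈ S :=
  hS.mem_of_tendsto (h.tendsto_add t) (Eventually.of_forall fun _ => hψ _)

theorem stronglyMeasurable [TopologicalSpace.PseudoMetrizableSpace X] [F.NeBot]
    [F.IsCountablyGenerated] (h : IsAutomorphicLimit F ψ ψt) (hψ : Continuous ψ) :
    StronglyMeasurable ψt :=
  stronglyMeasurable_of_tendsto F
    (fun s => (hψ.comp (continuous_add_const s)).stronglyMeasurable)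
    (tendsto_pi_nhds.2 h.tendsto_add)

/-- The limits `G N` are uniformly Cauchy because the shifts of the `S N` are, and the double limits
in `N` and in the shift can then be interchanged. -/
theorem exists_of_tendstoUniformly {V : Type*} [NormedAddCommGroup V] [CompleteSpace V] [F.NeBot]
    {S G : ℕ → ℝ → V} {ψ : ℝ → V} (hSG : ∀ N, IsAutomorphicLimit F (S N) (G N))
    (hS : TendstoUniformly S ψ atTop) : ∃ ψt, IsAutomorphicLimit F ψ ψt := by
  have hGcauchy : UniformCauchySeqOn G atTop Set.univ := by
    have hScauchy := (tendstoUniformlyOn_univ.2 hS).uniformCauchySeqOn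
    rw [Metric.uniformCauchySeqOn_iff] at hScauchy ⊢
    intro ε hε
    obtain ⟨N, hN⟩ := hScauchy (ε / 2) (half_pos hε)
    refine ⟨N, fun m hm n hn t _ => lt_of_le_of_lt ?_ (half_lt_self hε)⟩
    exact le_of_tendsto (((hSG m).tendsto_add t).dist ((hSG n).tendsto_add t))
      (Eventually.of_forall fun s => (hN m hm n hn _ (Set.mem_univ _)).le)
  choose ψt hψt using fun t =>
    cauchySeq_tendsto_of_complete (hGcauchy.cauchySeq (Set.mem_univ t))
  have hG : TendstoUniformly G ψt atTop :=
    tendstoUniformlyOn_univ.1 (hGcauchy.tendstoUniformlyOn_of_tendsto fun t _ => hψt t)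
  exact ⟨ψt,
    fun t => (hS.comp (t + ·)).tendsto_of_eventually_tendsto
      (Eventually.of_forall fun N => (hSG N).tendsto_add t) (hψt t),
    fun t => (hG.comp (t - ·)).tendsto_of_eventually_tendsto
      (Eventually.of_forall fun N => (hSG N).tendsto_sub t) (hS.tendsto_at t)⟩

end IsAutomorphicLimit

theorem exists_le_neBot_forall_of_forall_exists_le {α : Type*} {p : ℕ → Filter α → Prop}
    (hmono : ∀ N ⦃F G : Filter α⦄, G ≤ F → p N F → p N G)
    (hex : ∀ N (F : Filter α), F.NeBot → F.IsCountablyGenerated →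
      ∃ G ≤ F, G.NeBot ∧ G.IsCountablyGenerated ∧ p N G)
    (F : Filter α) [F.NeBot] [F.IsCountablyGenerated] :
    ∃ G ≤ F, G.NeBot ∧ G.IsCountablyGenerated ∧ ∀ N, p N G := by
  choose next hle hne hcg hp using hex
  let seq : ℕ → {G : Filter α // G.NeBot ∧ G.IsCountablyGenerated} := fun N =>
    Nat.rec ⟨F, inferInstance, inferInstance⟩
      (fun N G => ⟨next N G.1 G.2.1 G.2.2, hne _ _ _ _, hcg _ _ _ _⟩) N
  have hanti : Antitone fun N => (seq N).1 := antitone_nat_of_succ_le fun N => hle _ _ _ _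
  have : ∀ N, (seq N).1.IsCountablyGenerated := fun N => (seq N).2.2
  exact ⟨⨅ N, (seq N).1, iInf_le _ 0,
    iInf_neBot_of_directed' hanti.directed_ge fun N => (seq N).2.1, inferInstance,
    fun N => hmono N (iInf_le _ (N + 1)) (hp _ _ _ _)⟩

theorem exists_le_neBot_tendsto_of_isCompact {α X : Type*} [TopologicalSpace X]
    [FirstCountableTopology X] {K : Set X} (hK : IsCompact K) {u : α → X} (hu : ∀ s, u s ∈ K)
    (F : Filter α) [F.NeBot] [F.IsCountablyGenerated] :
    ∃ G ≤ F, G.NeBot ∧ G.IsCountablyGenerated ∧ ∃ a, Tendsto u G (𝓝 a) := by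
  obtain ⟨a, -, ha⟩ := hK (f := F.map u) (tendsto_principal.2 (Eventually.of_forall hu))
  refine ⟨F ⊓ comap u (𝓝 a), inf_le_left, ?_, inferInstance, a,
    tendsto_comap.mono_left inf_le_right⟩
  rw [← map_neBot_iff u, Filter.push_pull, inf_comm]
  exact ha

section Basic

variable {V W : Type*} [NormedAddCommGroup V] [NormedAddCommGroup W]

theorem almostAutomorphic_iff {ψ : ℝ → V} :
    AlmostAutomorphic ψ ↔ Continuous ψ ∧ ∀ F : Filter ℝ, F.NeBot → F.IsCountablyGenerated →
      ∃ G ≤ F, G.NeBot ∧ G.IsCountablyGenerated ∧ ∃ ψt, IsAutomorphicLimit G ψ ψt := by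
  refine and_congr_right fun _ => ⟨fun h F _ _ => ?_, fun h σ => ?_⟩
  · obtain ⟨σ, hσ⟩ := exists_seq_tendsto F
    obtain ⟨k, hk, ψt, hadd, hsub⟩ := h σ
    exact ⟨map (σ ∘ k) atTop, hσ.comp hk.tendsto_atTop, inferInstance, inferInstance, ψt,
      fun t => tendsto_map'_iff.2 (hadd t), fun t => tendsto_map'_iff.2 (hsub t)⟩
  · obtain ⟨G, hG, _, _, ψt, hψt⟩ := h (map σ atTop) inferInstance inferInstance
    have : (atTop ⊓ comap σ G).NeBot := by
      rwa [← map_neBot_iff σ, Filter.push_pull, inf_eq_right.2 hG]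
    obtain ⟨k, hk, hkG⟩ := subseq_tendsto_of_neBot (f := atTop ⊓ comap σ G) (u := id)
      (by rwa [map_id, inf_eq_left.2 inf_le_left])
    have hσk : Tendsto (σ ∘ k) atTop G := tendsto_comap_iff.1 (tendsto_inf.1 hkG).2
    exact ⟨k, hk, ψt, fun t => (hψt.tendsto_add t).comp hσk,
      fun t => (hψt.tendsto_sub t).comp hσk⟩

namespace AlmostAutomorphic

variable {ψ χ : ℝ → V}

theorem continuous (h : AlmostAutomorphic ψ) : Continuous ψ := h.1

theorem exists_isAutomorphicLimit (h : AlmostAutomorphic ψ) (F : Filter ℝ) [F.NeBot]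
    [F.IsCountablyGenerated] :
    ∃ G ≤ F, G.NeBot ∧ G.IsCountablyGenerated ∧ ∃ ψt, IsAutomorphicLimit G ψ ψt :=
  (almostAutomorphic_iff.1 h).2 F inferInstance inferInstance

theorem const (c : V) : AlmostAutomorphic fun _ : ℝ => c :=
  ⟨continuous_const, fun _ => ⟨id, strictMono_id, fun _ => c,
    fun _ => tendsto_const_nhds, fun _ => tendsto_const_nhds⟩⟩

theorem continuous_comp (h : AlmostAutomorphic ψ) {g : V → W} (hg : Continuous g) :
    AlmostAutomorphic fun t => g (ψ t) := by
  refine almostAutomorphic_iff.2 ⟨hg.comp h.continuous, fun F _ _ => ?_⟩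
  obtain ⟨G, hGF, hne, hcg, ψt, hψt⟩ := h.exists_isAutomorphicLimit F
  exact ⟨G, hGF, hne, hcg, _, hψt.continuous_comp hg⟩

theorem prodMk {χ : ℝ → W} (h : AlmostAutomorphic ψ) (h' : AlmostAutomorphic χ) :
    AlmostAutomorphic fun t => (ψ t, χ t) := by
  refine almostAutomorphic_iff.2 ⟨h.continuous.prodMk h'.continuous, fun F _ _ => ?_⟩
  obtain ⟨G, hGF, _, _, ψt, hψt⟩ := h.exists_isAutomorphicLimit F
  obtain ⟨H, hHG, hne, hcg, χt, hχt⟩ := h'.exists_isAutomorphicLimit G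
  exact ⟨H, hHG.trans hGF, hne, hcg, _, (hψt.mono hHG).prodMk hχt⟩

theorem add (h : AlmostAutomorphic ψ) (h' : AlmostAutomorphic χ) :
    AlmostAutomorphic fun t => ψ t + χ t :=
  (h.prodMk h').continuous_comp continuous_add

theorem smul {𝕜 : Type*} [NormedField 𝕜] [NormedSpace 𝕜 V] {c : ℝ → 𝕜}
    (hc : AlmostAutomorphic c) (h : AlmostAutomorphic ψ) : AlmostAutomorphic fun t => c t • ψ t :=
  (hc.prodMk h).continuous_comp continuous_smul

theorem sum {ι : Type*} (s : Finset ι) {ψ : ι → ℝ → V} (h : ∀ i ∈ s, AlmostAutomorphic (ψ i)) :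
    AlmostAutomorphic fun t => ∑ i ∈ s, ψ i t := by
  induction s using Finset.cons_induction with
  | empty => exact const 0
  | cons i s hi ih =>
    simp only [Finset.sum_cons]
    exact (h i (s.mem_cons_self i)).add (ih fun j hj => h j (Finset.mem_cons_of_mem hj))

theorem comp_neg (h : AlmostAutomorphic ψ) : AlmostAutomorphic fun t => ψ (-t) := by
  refine almostAutomorphic_iff.2 ⟨h.continuous.comp continuous_neg, fun F _ _ => ?_⟩
  obtain ⟨G, hGF, _, _, ψt, hψt⟩ := h.exists_isAutomorphicLimit (F.map Neg.neg)
  exact ⟨G.map Neg.neg, (map_mono hGF).trans_eq (by rw [map_map, neg_comp_neg, map_id]),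
    inferInstance, inferInstance, _, hψt.comp_neg⟩

theorem isCompact_closure_range (h : AlmostAutomorphic ψ) : IsCompact (closure (Set.range ψ)) := by
  refine IsSeqCompact.isCompact fun u hu => ?_
  have happrox : ∀ n : ℕ, ∃ s, dist (u n) (ψ s) < 1 / (n + 1) := fun n => by
    simpa using Metric.mem_closure_iff.1 (hu n) (1 / (n + 1)) Nat.one_div_pos_of_nat
  choose σ hσ using happrox
  obtain ⟨k, hk, ψt, hadd, -⟩ := h.2 σ
  have hlim : Tendsto (fun n => ψ (σ (k n))) atTop (𝓝 (ψt 0)) := by simpa using hadd 0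
  have hdist : Tendsto (fun n => dist (ψ (σ (k n))) (u (k n))) atTop (𝓝 0) := by
    refine squeeze_zero (fun _ => dist_nonneg) (fun n => ?_)
      (tendsto_one_div_add_atTop_nhds_zero_nat.comp hk.tendsto_atTop)
    rw [dist_comm]
    exact (hσ (k n)).le
  exact ⟨ψt 0, mem_closure_of_tendsto hlim (Eventually.of_forall fun n => Set.mem_range_self _),
    k, hk, hlim.congr_dist hdist⟩

theorem exists_norm_le (h : AlmostAutomorphic ψ) : ∃ C, ∀ t, ‖ψ t‖ ≤ C := by
  obtain ⟨C, hC⟩ := h.isCompact_closure_range.isBounded.exists_norm_le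
  exact ⟨C, fun t => hC _ (subset_closure (Set.mem_range_self t))⟩

theorem exists_forall_exists_abs_sub_le_mem (h : AlmostAutomorphic ψ) {U : Set V} (hU : IsOpen U)
    {t₀ : ℝ} (ht₀ : ψ t₀ ∈ U) : ∃ L, ∀ s, ∃ t, |t - s| ≤ L ∧ ψ t ∈ U := by
  by_contra! hgap
  choose c hc using hgap
  obtain ⟨G, hG, _, _, ψt, hψt⟩ := h.exists_isAutomorphicLimit (map c atTop)
  have hψtU : ∀ t, ψt t ∈ Uᶜ := fun t => by
    have hshift : ∀ᶠ s in map c atTop, ψ (t + s) ∈ Uᶜ := eventually_map.2 <| by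
      filter_upwards [eventually_ge_atTop |t|] with L hL
      exact hc L _ (by simpa using hL)
    exact hU.isClosed_compl.mem_of_tendsto (hψt.tendsto_add t) (hG hshift)
  exact hψt.symm.mem_of_isClosed hU.isClosed_compl hψtU t₀ ht₀

theorem of_forall_exists_norm_sub_le [CompleteSpace V]
    (h : ∀ ε > 0, ∃ χ, AlmostAutomorphic χ ∧ ∀ t, ‖ψ t - χ t‖ ≤ ε) : AlmostAutomorphic ψ := by
  choose S hS hSψ using fun N : ℕ => h (1 / (N + 1)) Nat.one_div_pos_of_nat
  have hunif : TendstoUniformly S ψ atTop := by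
    refine Metric.tendstoUniformly_iff.2 fun ε hε => ?_
    filter_upwards [tendsto_one_div_add_atTop_nhds_zero_nat.eventually_lt_const hε] with N hN t
    exact (dist_eq_norm (ψ t) (S N t)).trans_lt ((hSψ N t).trans_lt hN)
  refine almostAutomorphic_iff.2
    ⟨hunif.continuous (Frequently.of_forall fun N => (hS N).continuous), fun F _ _ => ?_⟩
  obtain ⟨G, hGF, hne, hcg, hG⟩ := exists_le_neBot_forall_of_forall_exists_le
    (p := fun N G => ∃ St, IsAutomorphicLimit G (S N) St)
    (fun N _ _ hle ⟨St, hSt⟩ => ⟨St, hSt.mono hle⟩)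
    (fun N F _ _ => (hS N).exists_isAutomorphicLimit F) F
  choose St hSt using hG
  exact ⟨G, hGF, hne, hcg, IsAutomorphicLimit.exists_of_tendstoUniformly hSt hunif⟩

theorem integral_smul_comp_sub {𝕜 : Type*} [NormedField 𝕜] [NormedSpace 𝕜 V] [NormedSpace ℝ V]
    {μ : Measure ℝ} {k : ℝ → 𝕜} (hk : Integrable k μ) (h : AlmostAutomorphic ψ) :
    AlmostAutomorphic fun t => ∫ s, k s • ψ (t - s) ∂μ := by
  obtain ⟨C, hC⟩ := h.exists_norm_le
  have hbound : ∀ {g : ℝ → V}, (∀ t, ‖g t‖ ≤ C) → ∀ t, ∀ᵐ s ∂μ, ‖k s • g (t - s)‖ ≤ ‖k s‖ * C :=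
    fun hg t => Eventually.of_forall fun s => (norm_smul_le _ _).trans (by gcongr; exact hg _)
  have hmeas : ∀ {g : ℝ → V}, StronglyMeasurable g → ∀ t,
      AEStronglyMeasurable (fun s => k s • g (t - s)) μ := fun hg t =>
    hk.aestronglyMeasurable.smul
      (hg.comp_measurable (measurable_const.sub measurable_id)).aestronglyMeasurable
  have hψm := h.continuous.stronglyMeasurable
  have hint : Integrable (fun s => ‖k s‖ * C) μ := hk.norm.mul_const C
  refine almostAutomorphic_iff.2 ⟨?_, fun F _ _ => ?_⟩
  · exact continuous_of_dominated (hmeas hψm) (hbound hC) hint (Eventually.of_forall fun s =>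
      (h.continuous.comp (continuous_sub_right s)).const_smul (k s))
  obtain ⟨G, hGF, hne, hcg, ψt, hψt⟩ := h.exists_isAutomorphicLimit F
  have hCt : ∀ t, ‖ψt t‖ ≤ C := fun t =>
    le_of_tendsto (hψt.tendsto_add t).norm (Eventually.of_forall fun _ => hC _)
  refine ⟨G, hGF, hne, hcg, fun t => ∫ s, k s • ψt (t - s) ∂μ, fun t => ?_, fun t => ?_⟩
  · refine tendsto_integral_filter_of_dominated_convergence _
      (Eventually.of_forall fun τ => hmeas hψm _) (Eventually.of_forall fun τ => hbound hC _) hint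
      (Eventually.of_forall fun s => Tendsto.const_smul ?_ (k s))
    simpa only [add_sub_right_comm] using hψt.tendsto_add (t - s)
  · refine tendsto_integral_filter_of_dominated_convergence _
      (Eventually.of_forall fun τ => hmeas (hψt.stronglyMeasurable h.continuous) _)
      (Eventually.of_forall fun τ => hbound hCt _) hint
      (Eventually.of_forall fun s => Tendsto.const_smul ?_ (k s))
    simpa only [sub_right_comm] using hψt.tendsto_sub (t - s)

end AlmostAutomorphic

end Basic

section Primitive

variable {V : Type*} [NormedAddCommGroup V] [NormedSpace ℝ V] {φ φt Φ : ℝ → V} {D : ℝ}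
  {F : Filter ℝ}

theorem tendsto_sub_of_integral_eq_sub [F.IsCountablyGenerated] (hφ : StronglyMeasurable φ)
    (hD : ∀ t, ‖φ t‖ ≤ D) (hΦ : ∀ s t, ∫ x in s..t, φ x = Φ t - Φ s)
    (hφt : ∀ t, Tendsto (fun τ => φ (t + τ)) F (𝓝 (φt t))) (s t : ℝ) :
    Tendsto (fun τ => Φ (t + τ) - Φ (s + τ)) F (𝓝 (∫ x in s..t, φt x)) := by
  simp only [← hΦ, ← intervalIntegral.integral_comp_add_right]
  exact intervalIntegral.tendsto_integral_filter_of_dominated_convergence (fun _ => D)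
    (Eventually.of_forall fun τ =>
      (hφ.comp_measurable (measurable_id.add_const τ)).aestronglyMeasurable)
    (Eventually.of_forall fun τ => Eventually.of_forall fun x _ => hD _) intervalIntegrable_const
    (Eventually.of_forall fun x _ => hφt x)

theorem exists_tendsto_of_integral_eq_sub [F.NeBot] [F.IsCountablyGenerated] {K : Set V}
    (hK : IsCompact K) (hφ : StronglyMeasurable φ) (hD : ∀ t, ‖φ t‖ ≤ D)
    (hΦ : ∀ s t, ∫ x in s..t, φ x = Φ t - Φ s) (hΦK : ∀ t, Φ t ∈ K)
    (hφt : ∀ t, Tendsto (fun τ => φ (t + τ)) F (𝓝 (φt t))) :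
    ∃ G ≤ F, G.NeBot ∧ G.IsCountablyGenerated ∧ ∃ Φt : ℝ → V,
      (∀ s t, ∫ x in s..t, φt x = Φt t - Φt s) ∧
      ∀ t, Tendsto (fun τ => Φ (t + τ)) G (𝓝 (Φt t)) := by
  obtain ⟨G, hGF, hne, hcg, a, ha⟩ := exists_le_neBot_tendsto_of_isCompact hK hΦK F
  have hsub := fun s t => (tendsto_sub_of_integral_eq_sub hφ hD hΦ hφt s t).mono_left hGF
  have hΦt : ∀ t, Tendsto (fun τ => Φ (t + τ)) G (𝓝 (a + ∫ x in 0..t, φt x)) := fun t => by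
    simpa only [zero_add, add_sub_cancel] using ha.add (hsub 0 t)
  exact ⟨G, hGF, hne, hcg, _, fun s t => tendsto_nhds_unique (hsub s t) ((hΦt t).sub (hΦt s)), hΦt⟩

theorem eq_zero_of_forall_isClosed_add_mem {c : V} {K : Set V} (hK : IsCompact K)
    (hΦK : ∀ t, Φ t ∈ K)
    (hc : ∀ S : Set V, IsClosed S → (∀ t, Φ t ∈ S) → ∀ t, Φ t + c ∈ S) : c = 0 := by
  obtain ⟨C, hC⟩ := hK.isBounded.exists_norm_le
  have hmem : ∀ n : ℕ, ∀ t, Φ t + n • c ∈ Metric.closedBall 0 C := by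
    intro n
    induction n with
    | zero => simpa using fun t => hC _ (hΦK t)
    | succ n ih =>
      intro t
      rw [succ_nsmul', ← add_assoc]
      exact hc ((· + n • c) ⁻¹' Metric.closedBall 0 C)
        (Metric.isClosed_closedBall.preimage (continuous_add_const _)) ih t
  by_contra hc0
  obtain ⟨n, hn⟩ := exists_lt_nsmul (norm_pos_iff.2 hc0) (C + ‖Φ 0‖)
  have hle : ‖n • c‖ ≤ C + ‖Φ 0‖ := by
    calc ‖n • c‖ = ‖(Φ 0 + n • c) - Φ 0‖ := by rw [add_sub_cancel_left]
      _ ≤ ‖Φ 0 + n • c‖ + ‖Φ 0‖ := norm_sub_le _ _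
      _ ≤ C + ‖Φ 0‖ := by gcongr; exact mem_closedBall_zero_iff.1 (hmem n 0)
  exact hn.not_ge (RCLike.norm_nsmul ℝ n c ▸ hle)

/-- Shifting a primitive `Φ` of `φ` forth and back along `F` gives another primitive `Φ + c` of `φ`.
Its values stay in every closed set containing the range of `Φ`, so the same holds for `Φ + n c`,
and boundedness forces `c = 0`. -/
theorem AlmostAutomorphic.of_hasDerivAt_of_isCompact [CompleteSpace V] {K : Set V}
    (hK : IsCompact K) (hφ : AlmostAutomorphic φ) (hΦ : ∀ t, HasDerivAt Φ (φ t) t)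
    (hΦK : ∀ t, Φ t ∈ K) : AlmostAutomorphic Φ := by
  obtain ⟨D, hD⟩ := hφ.exists_norm_le
  have hint : ∀ s t, ∫ x in s..t, φ x = Φ t - Φ s := fun s t =>
    intervalIntegral.integral_eq_sub_of_hasDerivAt (fun x _ => hΦ x)
      (hφ.continuous.intervalIntegrable s t)
  refine almostAutomorphic_iff.2
    ⟨continuous_iff_continuousAt.2 fun t => (hΦ t).continuousAt, fun F _ _ => ?_⟩
  obtain ⟨G, hGF, _, _, φt, hφt⟩ := hφ.exists_isAutomorphicLimit F
  obtain ⟨H, hHG, _, _, Φt, hintt, hΦt⟩ := exists_tendsto_of_integral_eq_sub hK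
    hφ.continuous.stronglyMeasurable hD hint hΦK hφt.tendsto_add
  have hmem : ∀ S : Set V, IsClosed S → (∀ t, Φ t ∈ S) → ∀ t, Φt t ∈ S := fun S hS h t =>
    hS.mem_of_tendsto (hΦt t) (Eventually.of_forall fun _ => h _)
  obtain ⟨I, hIH, _, _, Φtt, hinttt, hΦtt⟩ := exists_tendsto_of_integral_eq_sub hK
    (hφt.stronglyMeasurable hφ.continuous)
    (fun t => le_of_tendsto (hφt.tendsto_add t).norm (Eventually.of_forall fun _ => hD _))
    hintt (hmem K hK.isClosed hΦK) (hφt.mono hHG).symm.tendsto_add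
  have hadd : ∀ t, Φtt t = Φ t + (Φtt 0 - Φ 0) := fun t => by
    have := (hinttt 0 t).symm.trans (hint 0 t)
    rw [sub_eq_iff_eq_add] at this
    rw [this]; abel
  have hzero : Φtt 0 - Φ 0 = 0 := eq_zero_of_forall_isClosed_add_mem hK hΦK fun S hS h t =>
    hadd t ▸ hS.mem_of_tendsto (hΦtt t) (Eventually.of_forall fun _ => hmem S hS h _)
  have hneg : I.map Neg.neg ≤ H :=
    (map_mono hIH).trans_eq (by rw [map_map, neg_comp_neg, map_id])
  refine ⟨I.map Neg.neg, hneg.trans (hHG.trans hGF), inferInstance, inferInstance, Φt,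
    fun t => (hΦt t).mono_left hneg, fun t => tendsto_map'_iff.2 ?_⟩
  simpa only [Function.comp_def, sub_neg_eq_add, hadd t, hzero, add_zero] using hΦtt t

end Primitive

section LinearEquation

variable {V : Type*} [NormedAddCommGroup V] [NormedSpace ℂ V]

theorem almostAutomorphic_cexp_mul {l : ℂ} (hl : l.re = 0) :
    AlmostAutomorphic fun t : ℝ => Complex.exp (l * t) := by
  have hexp : ∀ s t : ℝ, Complex.exp (l * t) * Complex.exp (l * s) = Complex.exp (l * ↑(t + s)) :=
    fun s t => by rw [← Complex.exp_add, Complex.ofReal_add, mul_add]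
  refine almostAutomorphic_iff.2 ⟨by fun_prop, fun F _ _ => ?_⟩
  obtain ⟨G, hGF, hne, hcg, w, hw⟩ := exists_le_neBot_tendsto_of_isCompact
    (isCompact_sphere (0 : ℂ) 1) (u := fun s : ℝ => Complex.exp (l * s))
    (fun s => by simp [Complex.norm_exp, hl]) F
  have hw0 : w ≠ 0 := by
    have : ‖w‖ = 1 := tendsto_nhds_unique hw.norm (by simp [Complex.norm_exp, hl])
    exact norm_ne_zero_iff.1 (this ▸ one_ne_zero)
  refine ⟨G, hGF, hne, hcg, fun t => Complex.exp (l * t) * w, fun t => ?_, fun t => ?_⟩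
  · simpa only [hexp] using hw.const_mul (Complex.exp (l * t))
  · have := ((hw.inv₀ hw0).const_mul (Complex.exp (l * t))).mul_const w
    rw [inv_mul_cancel_right₀ hw0] at this
    refine this.congr fun s => ?_
    rw [← Complex.exp_neg, ← mul_neg, ← Complex.ofReal_neg, hexp, sub_eq_add_neg]

theorem hasDerivAt_cexp_mul_smul {l : ℂ} {y : ℝ → V} {v : V} {t : ℝ}
    (hy : HasDerivAt y (v - l • y t) t) :
    HasDerivAt (fun t : ℝ => Complex.exp (l * t) • y t) (Complex.exp (l * t) • v) t := by
  have hexp : HasDerivAt (fun t : ℝ => Complex.exp (l * t)) (Complex.exp (l * t) * (l * 1)) t :=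
    ((hasDerivAt_id t).ofReal_comp.const_mul l).cexp
  refine (hexp.smul hy).congr_deriv ?_
  module

theorem eq_integral_Ioi_cexp_smul [CompleteSpace V] {l : ℂ} (hl : l.re < 0) {f y : ℝ → V}
    (hf : Continuous f) {D : ℝ} (hD : ∀ t, ‖f t‖ ≤ D)
    (hy : ∀ t, HasDerivAt y (l • y t + f t) t) {C : ℝ} (hC : ∀ t, ‖y t‖ ≤ C) (t : ℝ) :
    y t = ∫ s : ℝ in Set.Ioi 0, Complex.exp (l * s) • f (t - s) := by
  have hderiv : ∀ s ∈ Set.Ici (0 : ℝ), HasDerivAt (fun s : ℝ => Complex.exp (l * s) • y (t - s))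
      (Complex.exp (l * s) • -f (t - s)) s := fun s _ =>
    hasDerivAt_cexp_mul_smul (((hy (t - s)).scomp s ((hasDerivAt_id s).const_sub t)).congr_deriv
      (by module))
  have hint : IntegrableOn (fun s : ℝ => Complex.exp (l * s) • -f (t - s)) (Set.Ioi 0) :=
    (integrableOn_exp_mul_complex_Ioi hl 0).smul_bdd D
      (by fun_prop : Continuous fun s => -f (t - s)).aestronglyMeasurable
      (Eventually.of_forall fun s => (norm_neg _).trans_le (hD _))
  have hlim : Tendsto (fun s : ℝ => Complex.exp (l * s) • y (t - s)) atTop (𝓝 0) := by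
    have hexp : Tendsto (fun s : ℝ => Complex.exp (l * s)) atTop (𝓝 0) := by
      simpa [Complex.tendsto_exp_nhds_zero_iff] using tendsto_id.const_mul_atTop_of_neg hl
    exact hexp.zero_smul_isBoundedUnder_le (isBoundedUnder_of ⟨C, fun s => hC _⟩)
  have := integral_Ioi_of_hasDerivAt_of_tendsto' hderiv hint hlim
  simpa [integral_neg] using this.symm

namespace AlmostAutomorphic

theorem of_hasDerivAt_smul_of_re_neg [CompleteSpace V] {l : ℂ} (hl : l.re < 0) {f y : ℝ → V}
    (hf : AlmostAutomorphic f) (hy : ∀ t, HasDerivAt y (l • y t + f t) t) {C : ℝ}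
    (hC : ∀ t, ‖y t‖ ≤ C) : AlmostAutomorphic y := by
  obtain ⟨D, hD⟩ := hf.exists_norm_le
  rw [funext (eq_integral_Ioi_cexp_smul hl hf.continuous hD hy hC)]
  exact integral_smul_comp_sub (integrableOn_exp_mul_complex_Ioi hl 0) hf

theorem of_hasDerivAt_smul_of_re_pos [CompleteSpace V] {l : ℂ} (hl : 0 < l.re) {f y : ℝ → V}
    (hf : AlmostAutomorphic f) (hy : ∀ t, HasDerivAt y (l • y t + f t) t) {C : ℝ}
    (hC : ∀ t, ‖y t‖ ≤ C) : AlmostAutomorphic y := by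
  have hneg : AlmostAutomorphic fun t => y (-t) :=
    of_hasDerivAt_smul_of_re_neg (l := -l) (by simpa using hl)
      (hf.comp_neg.continuous_comp continuous_neg)
      (fun t => ((hy (-t)).scomp t (hasDerivAt_neg t)).congr_deriv (by module)) fun t => hC (-t)
  simpa only [neg_neg] using hneg.comp_neg

theorem of_hasDerivAt_smul_of_re_eq_zero [ProperSpace V] {l : ℂ} (hl : l.re = 0) {f y : ℝ → V}
    (hf : AlmostAutomorphic f) (hy : ∀ t, HasDerivAt y (l • y t + f t) t) {C : ℝ}
    (hC : ∀ t, ‖y t‖ ≤ C) : AlmostAutomorphic y := by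
  have hrot : AlmostAutomorphic fun t : ℝ => Complex.exp (-l * t) • y t := by
    refine of_hasDerivAt_of_isCompact (isCompact_closedBall (0 : V) C)
      ((almostAutomorphic_cexp_mul (l := -l) (by simpa using hl)).smul hf)
      (fun t => hasDerivAt_cexp_mul_smul ((hy t).congr_deriv (by module))) fun t => ?_
    simpa [norm_smul, Complex.norm_exp, hl] using hC t
  simpa [smul_smul, ← Complex.exp_add] using (almostAutomorphic_cexp_mul hl).smul hrot

theorem of_hasDerivAt_smul [ProperSpace V] (l : ℂ) {f y : ℝ → V} (hf : AlmostAutomorphic f)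
    (hy : ∀ t, HasDerivAt y (l • y t + f t) t) {C : ℝ} (hC : ∀ t, ‖y t‖ ≤ C) :
    AlmostAutomorphic y := by
  rcases lt_trichotomy l.re 0 with hl | hl | hl
  exacts [hf.of_hasDerivAt_smul_of_re_neg hl hy hC, hf.of_hasDerivAt_smul_of_re_eq_zero hl hy hC,
    hf.of_hasDerivAt_smul_of_re_pos hl hy hC]

end AlmostAutomorphic

end LinearEquation

theorem hasDerivAt_continuousLinearMap_comp {𝕜 E E' : Type*} [NontriviallyNormedField 𝕜]
    [NormedAlgebra ℝ 𝕜] [NormedAddCommGroup E] [NormedSpace 𝕜 E] [NormedSpace ℝ E]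
    [IsScalarTower ℝ 𝕜 E] [NormedAddCommGroup E'] [NormedSpace 𝕜 E'] [NormedSpace ℝ E']
    [IsScalarTower ℝ 𝕜 E'] (L : E →L[𝕜] E') {y : ℝ → E} {y' : E} {t : ℝ}
    (hy : HasDerivAt y y' t) : HasDerivAt (fun t => L (y t)) (L y') t :=
  (L.restrictScalars ℝ).hasFDerivAt.comp_hasDerivAt t hy

namespace AlmostAutomorphic

section FiniteDimensional

variable {E : Type*} [NormedAddCommGroup E] [NormedSpace ℂ E] [FiniteDimensional ℂ E]

theorem of_forall_dual {ψ : ℝ → E}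
    (h : ∀ φ : Module.Dual ℂ E, AlmostAutomorphic fun t => φ (ψ t)) : AlmostAutomorphic ψ := by
  let b := Module.finBasis ℂ E
  have hsum : AlmostAutomorphic fun t => ∑ i, b.repr (ψ t) i • b i :=
    sum _ fun i _ => (h (b.coord i)).smul (const (b i))
  simpa only [b.sum_repr] using hsum

theorem dual_comp_of_hasDerivAt {B : Module.End ℂ E} {f y : ℝ → E} (hf : AlmostAutomorphic f)
    (hy : ∀ t, HasDerivAt y (B (y t) + f t) t) {C : ℝ} (hC : ∀ t, ‖y t‖ ≤ C) {l : ℂ} {k : ℕ}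
    {φ : Module.Dual ℂ E} (hφ : ((B.dualMap - l • 1) ^ k) φ = 0) :
    AlmostAutomorphic fun t => φ (y t) := by
  induction k generalizing φ with
  | zero =>
    obtain rfl : φ = 0 := hφ
    exact const 0
  | succ k ih =>
    rw [pow_succ, Module.End.mul_apply] at hφ
    have hφB : ∀ x, φ (B x) = l • φ x + (B.dualMap - l • 1) φ x := fun x => by simp
    let φc := φ.toContinuousLinearMap
    refine of_hasDerivAt_smul l ((ih hφ).add (hf.continuous_comp φc.continuous)) (fun t => ?_)
      fun t => φc.le_opNorm_of_le (hC t)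
    refine (hasDerivAt_continuousLinearMap_comp φc (hy t)).congr_deriv ?_
    rw [map_add, ← add_assoc]
    exact congrArg (· + _) (hφB (y t))

theorem of_hasDerivAt_of_finiteDimensional (B : Module.End ℂ E) {f y : ℝ → E}
    (hf : AlmostAutomorphic f) (hy : ∀ t, HasDerivAt y (B (y t) + f t) t) {C : ℝ}
    (hC : ∀ t, ‖y t‖ ≤ C) : AlmostAutomorphic y := by
  refine of_forall_dual fun φ => ?_
  have hφ : φ ∈ ⨆ l, Module.End.maxGenEigenspace B.dualMap l :=
    Module.End.iSup_maxGenEigenspace_eq_top B.dualMap ▸ Submodule.mem_top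
  induction hφ using Submodule.iSup_induction' with
  | mem l φ hφ =>
    obtain ⟨k, hk⟩ := (Module.End.mem_maxGenEigenspace _ _ _).1 hφ
    exact dual_comp_of_hasDerivAt hf hy hC hk
  | zero => exact const 0
  | add φ φ' _ _ h h' => exact h.add h'

end FiniteDimensional

/-- The projection of the equation onto `U` is closed up because `x - P x ∈ Uᗮ` is mapped into
`Uᗮ`, so that `P (A x) = P (A (P x))`. -/
theorem starProjection_of_hasDerivAt {V : Type*} [NormedAddCommGroup V] [InnerProductSpace ℂ V]
    {A : V →L[ℂ] V} {U : Submodule ℂ V} [FiniteDimensional ℂ U] (hA : ∀ v ∈ Uᗮ, A v ∈ Uᗮ)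
    {f y : ℝ → V} (hf : AlmostAutomorphic f) (hy : ∀ t, HasDerivAt y (A (y t) + f t) t) {C : ℝ}
    (hC : ∀ t, ‖y t‖ ≤ C) : AlmostAutomorphic fun t => U.starProjection (y t) := by
  let p := U.orthogonalProjectionOnto
  have hpA : ∀ x, p (A x) = p (A (p x)) := fun x => by
    rw [← sub_eq_zero, ← map_sub, ← map_sub]
    exact Submodule.orthogonalProjectionOnto_eq_zero_iff.2
      (hA _ (U.sub_starProjection_mem_orthogonal x))
  have hpy : AlmostAutomorphic fun t => p (y t) :=
    of_hasDerivAt_of_finiteDimensional (p ∘L A ∘L U.subtypeL : U →L[ℂ] U)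
      (hf.continuous_comp p.continuous)
      (fun t => (hasDerivAt_continuousLinearMap_comp p (hy t)).congr_deriv (by
        rw [map_add, hpA]; rfl))
      fun t => p.le_opNorm_of_le (hC t)
  exact hpy.continuous_comp U.subtypeL.continuous

end AlmostAutomorphic

section Tail

variable {𝕜 V ι : Type*} [RCLike 𝕜] [NormedAddCommGroup V] [InnerProductSpace 𝕜 V]
  {U : ι → Submodule 𝕜 V} [∀ i, (U i).HasOrthogonalProjection]

theorem antitone_norm_starProjection_orthogonal [Preorder ι] (hU : Monotone U) (v : V) :
    Antitone fun i => ‖(U i)ᗮ.starProjection v‖ := fun i j hij => by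
  have hcomp :=
    Submodule.starProjection_comp_starProjection_of_le (Submodule.orthogonal_le (hU hij))
  calc ‖(U j)ᗮ.starProjection v‖ = ‖(U j)ᗮ.starProjection ((U i)ᗮ.starProjection v)‖ := by
        rw [← ContinuousLinearMap.comp_apply, hcomp]
    _ ≤ ‖(U i)ᗮ.starProjection v‖ := Submodule.norm_starProjection_apply_le _ _

theorem tendstoUniformlyOn_norm_starProjection_orthogonal [SemilatticeSup ι] (hU : Monotone U)
    (hUd : ⊤ ≤ (⨆ i, U i).topologicalClosure) {K : Set V} (hK : IsCompact K) :
    TendstoUniformlyOn (fun i v => ‖(U i)ᗮ.starProjection v‖) 0 atTop K := by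
  refine Antitone.tendstoUniformlyOn_of_forall_tendsto hK (fun i => by fun_prop)
    (fun v _ => antitone_norm_starProjection_orthogonal hU v) continuousOn_const fun v _ => ?_
  simp only [Submodule.starProjection_orthogonal_val]
  simpa using ((Submodule.starProjection_tendsto_self U hU v hUd).const_sub v).norm

theorem exists_forall_exists_norm_starProjection_orthogonal_lt [SemilatticeSup ι] [Nonempty ι]
    (hU : Monotone U) (hUd : ⊤ ≤ (⨆ i, U i).topologicalClosure) {y : ℝ → V} {C : ℝ}
    (hC : ∀ t, ‖y t‖ ≤ C) (hy : ∀ i, AlmostAutomorphic fun t => (U i).starProjection (y t))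
    {δ : ℝ} (hδ : 0 < δ) :
    ∃ i L, ∀ s, ∃ t, |t - s| ≤ L ∧ ‖(U i)ᗮ.starProjection (y t)‖ < δ := by
  have hbdd : BddAbove (Set.range fun t => ‖y t‖ ^ 2) :=
    ⟨C ^ 2, Set.forall_mem_range.2 fun t => by gcongr; exact hC t⟩
  set M := ⨆ t, ‖y t‖ ^ 2
  obtain ⟨t₀, ht₀⟩ := exists_lt_of_lt_ciSup (sub_lt_self M (pow_pos hδ 2))
  obtain ⟨i, hi⟩ := ((Submodule.starProjection_tendsto_self U hU (y t₀) hUd).norm.pow 2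
    |>.eventually_const_lt ht₀).exists
  obtain ⟨L, hL⟩ := (hy i).exists_forall_exists_abs_sub_le_mem (U := {v | M - δ ^ 2 < ‖v‖ ^ 2})
    (isOpen_lt continuous_const (by fun_prop)) (t₀ := t₀) (by exact hi)
  refine ⟨i, L, fun s => ?_⟩
  obtain ⟨t, hts, ht⟩ := hL s
  refine ⟨t, hts, lt_of_pow_lt_pow_left₀ 2 hδ.le ?_⟩
  have hpyth := Submodule.norm_sq_eq_add_norm_sq_starProjection (y t) (U i)
  have hle : ‖y t‖ ^ 2 ≤ M := le_ciSup hbdd t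
  have ht : M - δ ^ 2 < ‖(U i).starProjection (y t)‖ ^ 2 := ht
  linarith

theorem norm_le_of_hasDerivAt_of_forall_exists_abs_sub_le {E : Type*} [NormedAddCommGroup E]
    [NormedSpace ℝ E] {g g' : ℝ → E} {η L δ : ℝ} (hg : ∀ t, HasDerivAt g (g' t) t)
    (hg' : ∀ t, ‖g' t‖ ≤ η) (h : ∀ s, ∃ t, |t - s| ≤ L ∧ ‖g t‖ ≤ δ) (s : ℝ) :
    ‖g s‖ ≤ δ + η * L := by
  obtain ⟨t, hts, ht⟩ := h s
  have hη : 0 ≤ η := (norm_nonneg _).trans (hg' s)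
  have hdiff : ‖g t - g s‖ ≤ η * ‖t - s‖ :=
    convex_univ.norm_image_sub_le_of_norm_hasDerivWithin_le
      (fun x _ => (hg x).hasDerivWithinAt) (fun x _ => hg' x) (Set.mem_univ _) (Set.mem_univ _)
  calc ‖g s‖ ≤ ‖g t‖ + ‖g t - g s‖ := norm_le_insert _ _
    _ ≤ δ + η * L := add_le_add ht (hdiff.trans (by gcongr; exact hts))

theorem AlmostAutomorphic.of_forall_starProjection [CompleteSpace V] [NormedSpace ℝ V]
    [IsScalarTower ℝ 𝕜 V] [SemilatticeSup ι] [Nonempty ι] (hU : Monotone U)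
    (hUd : ⊤ ≤ (⨆ i, U i).topologicalClosure) {y y' : ℝ → V} {C : ℝ} (hC : ∀ t, ‖y t‖ ≤ C)
    (hy : ∀ t, HasDerivAt y (y' t) t) {K : Set V} (hK : IsCompact K) (hy' : ∀ t, y' t ∈ K)
    (hproj : ∀ i, AlmostAutomorphic fun t => (U i).starProjection (y t)) :
    AlmostAutomorphic y := by
  refine of_forall_exists_norm_sub_le fun ε hε => ?_
  obtain ⟨i, L, hL⟩ :=
    exists_forall_exists_norm_starProjection_orthogonal_lt hU hUd hC hproj (half_pos hε)
  have hL0 : 0 ≤ L := let ⟨_, ht, _⟩ := hL 0; (abs_nonneg _).trans ht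
  have hη : 0 < ε / 2 / (L + 1) := by positivity
  obtain ⟨j, hij, hj⟩ := (((Metric.tendstoUniformlyOn_iff.1
    (tendstoUniformlyOn_norm_starProjection_orthogonal hU hUd hK) _ hη).and
      (eventually_ge_atTop i)).exists).imp fun _ => And.symm
  refine ⟨_, hproj j, fun t => ?_⟩
  rw [← Submodule.starProjection_orthogonal_val]
  have hsmall := norm_le_of_hasDerivAt_of_forall_exists_abs_sub_le
    (fun t => hasDerivAt_continuousLinearMap_comp (U j)ᗮ.starProjection (hy t))
    (fun t => by simpa using (hj _ (hy' t)).le)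
    (fun s => (hL s).imp fun t ht =>
      ⟨ht.1, ((antitone_norm_starProjection_orthogonal hU (y t) hij).trans_lt ht.2).le⟩) t
  refine hsmall.trans ?_
  calc ε / 2 + ε / 2 / (L + 1) * L ≤ ε / 2 + ε / 2 / (L + 1) * (L + 1) := by gcongr; linarith
    _ = ε := by rw [div_mul_cancel₀ _ (by positivity), add_halves]

end Tail

theorem map_mem_finsetSup_orthogonal {𝕜 V ι : Type*} [RCLike 𝕜] [NormedAddCommGroup V]
    [InnerProductSpace 𝕜 V] {A : V → V} {W : ι → Submodule 𝕜 V}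
    (hA : ∀ i, ∀ v ∈ (W i)ᗮ, A v ∈ (W i)ᗮ) (s : Finset ι) :
    ∀ v ∈ (s.sup W)ᗮ, A v ∈ (s.sup W)ᗮ := by
  simp only [Finset.sup_eq_iSup, iSup_subtype', ← Submodule.iInf_orthogonal, Submodule.mem_iInf]
  exact fun v hv i => hA i v (hv i)

theorem map_mem_orthogonal_of_comp_eq {𝕜 V : Type*} [RCLike 𝕜] [NormedAddCommGroup V]
    [InnerProductSpace 𝕜 V] {A P : V →L[𝕜] V} {U : Submodule 𝕜 V}
    (hP : ∀ v, P v ∈ U ∧ v - P v ∈ Uᗮ) (hPA : A.comp P = P.comp A) {v : V} (hv : v ∈ Uᗮ) :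
    A v ∈ Uᗮ := by
  have hPv : P v = 0 := by
    have : P v ∈ Uᗮ := by simpa using Uᗮ.sub_mem hv (hP v).2
    exact inner_self_eq_zero.1 (Submodule.inner_right_of_mem_orthogonal (hP v).1 this)
  have hPAv : P (A v) = 0 := by
    rw [← ContinuousLinearMap.comp_apply, ← hPA, ContinuousLinearMap.comp_apply, hPv, map_zero]
  simpa only [hPAv, sub_zero] using (hP (A v)).2

theorem compact_operator_hilbert_sum_bounded_solutions_almost_automorphic_general
    {V ι : Type*} [NormedAddCommGroup V] [InnerProductSpace ℂ V] [CompleteSpace V]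
    {A : V →L[ℂ] V} (hA : IsCompactOperator A) {W : ι → Submodule ℂ V}
    [∀ i, FiniteDimensional ℂ (W i)] (hWdense : (⨆ i, W i).topologicalClosure = ⊤)
    (hWA : ∀ i, ∀ v ∈ (W i)ᗮ, A v ∈ (W i)ᗮ) {f : ℝ → V} (hf : AlmostAutomorphic f) {y : ℝ → V}
    (hy : ∀ t, HasDerivAt y (A (y t) + f t) t) (hyb : ∃ C, ∀ t, ‖y t‖ ≤ C) :
    AlmostAutomorphic y := by
  classical
  obtain ⟨C, hC⟩ := hyb
  obtain ⟨K, hK, hKA⟩ := hA.image_closedBall_subset_compact C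
  have hdense : ⊤ ≤ (⨆ s : Finset ι, s.sup W).topologicalClosure := by
    simp only [Finset.sup_eq_iSup, ← iSup_eq_iSup_finset, hWdense, le_refl]
  exact .of_forall_starProjection (fun _ _ => Finset.sup_mono) hdense hC hy
    (hK.add hf.isCompact_closure_range)
    (fun t => Set.add_mem_add (hKA ⟨y t, mem_closedBall_zero_iff.2 (hC t), rfl⟩)
      (subset_closure (Set.mem_range_self t)))
    fun s => hf.starProjection_of_hasDerivAt (map_mem_finsetSup_orthogonal hWA s) hy hC

theorem compact_operator_hilbert_sum_bounded_solutions_almost_automorphic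
    {V : Type*} [NormedAddCommGroup V] [InnerProductSpace ℂ V] [CompleteSpace V]
    (A : V →L[ℂ] V) (hA : IsCompactOperator A)
    (W : ℕ → Submodule ℂ V)
    (hWfin : ∀ k, FiniteDimensional ℂ (W k))
    (hWclosed : ∀ k, IsClosed (W k : Set V))
    (hWorth : ∀ k l, k ≠ l → W k ≤ (W l)ᗮ)
    (hWdense : (⨆ k, W k).topologicalClosure = ⊤)
    (P : ℕ → V →L[ℂ] V)
    (hPproj : ∀ (k : ℕ) (v : V), P k v ∈ W k ∧ v - P k v ∈ (W k)ᗮ)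
    (hPA : ∀ k : ℕ, A.comp (P k) = (P k).comp A)
    (f : ℝ → V) (hfc : Continuous f) (hfb : ∃ C, ∀ t, ‖f t‖ ≤ C)
    (hfaa : AlmostAutomorphic f)
    (y : ℝ → V)
    (hy : ∀ t : ℝ, HasDerivAt y (A (y t) + f t) t)
    (hyb : ∃ C, ∀ t : ℝ, ‖y t‖ ≤ C) :
    AlmostAutomorphic y := by
  exact compact_operator_hilbert_sum_bounded_solutions_almost_automorphic_general hA hWdense
    (fun k _ => map_mem_orthogonal_of_comp_eq (hPproj k) (hPA k)) hfaa hy hyb
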